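/- arXiv:1710.07234 — 2 statements merged into one kernel-verified Lean document; each statement's English description precedes it below -/
import Mathlib

section
/- Let N be a positive integer, let Q : Fin N → Fin N → ℕ be a matrix of queue lengths, and let σ_r and σ_g be two permutations of Fin N (the red and green matchings). Define the merge permutation σ = σ_g⁻¹ ∘ σ_r. Then there exists a permutation S of Fin N such that (i) on each orbit C of σ, S agrees with σ_r on all of C if Σ_{i∈C} Q i (σ_r i) ≥ Σ_{i∈C} Q i (σ_g i), and agrees with σ_g on all of C otherwise (in particular S i ∈ {σ_r i, σ_g i} for every i), and (ii) Σ_i Q i (S i) ≥ max(Σ_i Q i (σ_r i), Σ_i Q i (σ_g i)). In other words, the per-cycle cherry-picking of the heavier sub-matching in SERENA's MERGE procedure yields a valid full matching whose weight is at least the weight of each of the two input matchings. -/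
open Finset

/-- A cyclewise inequality sums to a global inequality. -/
lemma sum_le_of_cycle_le {N : ℕ} (σ : Equiv.Perm (Fin N)) (f g : Fin N → ℕ)
    (h : ∀ i, ∑ j ∈ Finset.univ.filter (fun j => σ.SameCycle i j), f j ≤
      ∑ j ∈ Finset.univ.filter (fun j => σ.SameCycle i j), g j) :
    ∑ i, f i ≤ ∑ i, g i := by
  classical
  let q : Fin N → Quotient (Equiv.Perm.SameCycle.setoid σ) := fun i => Quotient.mk _ i
  rw [← Finset.sum_fiberwise Finset.univ q f, ← Finset.sum_fiberwise Finset.univ q g]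
  refine Finset.sum_le_sum fun c _ => ?_
  induction c using Quotient.inductionOn with
  | h i =>
    have e : Finset.univ.filter (fun j => q j = Quotient.mk _ i) =
        Finset.univ.filter (fun j => σ.SameCycle i j) := by
      ext j
      simp only [Finset.mem_filter, Finset.mem_univ, true_and]
      exact Quotient.eq.trans ⟨fun h => Equiv.Perm.SameCycle.symm h,
        fun h => Equiv.Perm.SameCycle.symm h⟩
    rw [e]
    exact h i

/-- SERENA's MERGE: per-cycle cherry-picking of the heavier sub-matching yields a valid
full matching whose weight is at least that of each of the two input matchings. -/
theorem serena_merge_exists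
    (N : ℕ) (hN : 0 < N) (Q : Fin N → Fin N → ℕ)
    (σr σg : Equiv.Perm (Fin N)) (σ : Equiv.Perm (Fin N)) (hσ : σ = σg⁻¹ * σr) :
    ∃ S : Equiv.Perm (Fin N),
      (∀ i : Fin N,
        (∑ j ∈ Finset.univ.filter (fun j => σ.SameCycle i j), Q j (σr j) ≥
            ∑ j ∈ Finset.univ.filter (fun j => σ.SameCycle i j), Q j (σg j) →
          ∀ j : Fin N, σ.SameCycle i j → S j = σr j) ∧
        (∑ j ∈ Finset.univ.filter (fun j => σ.SameCycle i j), Q j (σr j) <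
            ∑ j ∈ Finset.univ.filter (fun j => σ.SameCycle i j), Q j (σg j) →
          ∀ j : Fin N, σ.SameCycle i j → S j = σg j)) ∧
      (∀ i : Fin N, S i = σr i ∨ S i = σg i) ∧
      (∑ i, Q i (S i) ≥ max (∑ i, Q i (σr i)) (∑ i, Q i (σg i))) := by
  classical
  let R : Fin N → ℕ := fun i =>
    ∑ j ∈ Finset.univ.filter (fun j => σ.SameCycle i j), Q j (σr j)
  let G : Fin N → ℕ := fun i =>
    ∑ j ∈ Finset.univ.filter (fun j => σ.SameCycle i j), Q j (σg j)
  have hF : ∀ i j, σ.SameCycle i j →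
      Finset.univ.filter (fun k => σ.SameCycle i k) =
        Finset.univ.filter (fun k => σ.SameCycle j k) := by
    intro i j hij
    ext k
    simp only [Finset.mem_filter, Finset.mem_univ, true_and]
    exact ⟨fun h => hij.symm.trans h, fun h => hij.trans h⟩
  have hR : ∀ i j, σ.SameCycle i j → R i = R j := fun i j h => by
    simp only [R]; rw [hF i j h]
  have hG : ∀ i j, σ.SameCycle i j → G i = G j := fun i j h => by
    simp only [G]; rw [hF i j h]
  let s : Fin N → Fin N := fun i => if G i ≤ R i then σr i else σg i
  have key : ∀ i j, G i ≤ R i → ¬ G j ≤ R j → σr i ≠ σg j := by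
    intro i j hi hj he
    have hs : σ i = j := by
      simp [hσ, Equiv.Perm.mul_apply, he]
    have hc : σ.SameCycle i j := ⟨1, by simpa using hs⟩
    rw [hR i j hc, hG i j hc] at hi
    exact hj hi
  have hinj : Function.Injective s := by
    intro i j h
    simp only [s] at h
    split_ifs at h with h1 h2 h2
    · exact σr.injective h
    · exact absurd h (key i j h1 h2)
    · exact absurd h.symm (key j i h2 h1)
    · exact σg.injective h
  have hr : ∀ i, G i ≤ R i → ∀ j, σ.SameCycle i j → s j = σr j := by
    intro i h j hc
    rw [hR i j hc, hG i j hc] at h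
    exact if_pos h
  have hg : ∀ i, R i < G i → ∀ j, σ.SameCycle i j → s j = σg j := by
    intro i h j hc
    rw [hR i j hc, hG i j hc] at h
    exact if_neg (not_le.mpr h)
  have hsum : ∀ i, R i ≤ ∑ j ∈ Finset.univ.filter (fun j => σ.SameCycle i j), Q j (s j) ∧
      G i ≤ ∑ j ∈ Finset.univ.filter (fun j => σ.SameCycle i j), Q j (s j) := by
    intro i
    rcases le_or_gt (G i) (R i) with h | h
    · have e : ∑ j ∈ Finset.univ.filter (fun j => σ.SameCycle i j), Q j (s j) = R i :=
        Finset.sum_congr rfl fun j hj => by rw [hr i h j (Finset.mem_filter.mp hj).2]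
      rw [e]
      exact ⟨le_rfl, h⟩
    · have e : ∑ j ∈ Finset.univ.filter (fun j => σ.SameCycle i j), Q j (s j) = G i :=
        Finset.sum_congr rfl fun j hj => by rw [hg i h j (Finset.mem_filter.mp hj).2]
      rw [e]
      exact ⟨h.le, le_rfl⟩
  refine ⟨Equiv.ofBijective s (Finite.injective_iff_bijective.mp hinj),
    fun i => ⟨hr i, hg i⟩, fun i => ?_, max_le ?_ ?_⟩
  · exact ite_eq_or_eq _ _ _
  · exact sum_le_of_cycle_le σ _ _ fun i => (hsum i).1
  · exact sum_le_of_cycle_le σ _ _ fun i => (hsum i).2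
end

section
/- Let N = 2^q with q ≥ 1, let σ be a permutation of Fin N, let i ∈ Fin N, and let l be the length of the cycle containing i. Then at least one of the following three situations occurs: (I) σ^(2^n)(i) = i for some nonnegative integer n ≤ q; (II) σ^(2^m)(i) = σ^(2^n)(i) for some nonnegative integers n < m ≤ q; (III) σ^(2^m)(i) = σ^(−2^n)(i) for some nonnegative integers n < m ≤ q — if and only if l is an ouroboros number with respect to N. In other words, a vertex can detect from its knowledge sets that it lies on an ouroboros cycle exactly when its cycle length is an ouroboros number. -/
/-- A positive integer `l` is an ouroboros number with respect to `N` if it divides a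
number of one of the forms `2^n` (with `0 ≤ n ≤ ⌈log₂ N⌉`), `2^m - 2^n`, or `2^m + 2^n`
(with `n < m ≤ ⌈log₂ N⌉`). -/
def IsOuroborosNumber (N l : ℕ) : Prop :=
  0 < l ∧
    ((∃ n : ℕ, n ≤ Nat.clog 2 N ∧ l ∣ 2 ^ n) ∨
     (∃ m n : ℕ, n < m ∧ m ≤ Nat.clog 2 N ∧ l ∣ 2 ^ m - 2 ^ n) ∨
     (∃ m n : ℕ, n < m ∧ m ≤ Nat.clog 2 N ∧ l ∣ 2 ^ m + 2 ^ n))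

theorem pow_apply_eq_self_iff_dvd {α : Type*} (σ : Equiv.Perm α) (i : α) (k : ℕ) :
    (σ ^ k) i = i ↔ Function.minimalPeriod σ i ∣ k := by
  rw [← Function.isPeriodicPt_iff_minimalPeriod_dvd, Equiv.Perm.coe_pow]
  rfl

/-- For `N = 2^q`, a vertex `i` detects (from its knowledge sets) one of the three ideal
situations if and only if the length of the cycle of `σ` containing `i` is an ouroboros
number with respect to `N`. -/
theorem ideal_situation_iff_ouroboros
    (q : ℕ) (hq : 1 ≤ q) (N : ℕ) (hN : N = 2 ^ q)
    (σ : Equiv.Perm (Fin N)) (i : Fin N)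
    (l : ℕ) (hl : l = Function.minimalPeriod σ i) :
    ((∃ n : ℕ, n ≤ q ∧ (σ ^ (2 ^ n)) i = i) ∨
     (∃ m n : ℕ, n < m ∧ m ≤ q ∧ (σ ^ (2 ^ m)) i = (σ ^ (2 ^ n)) i) ∨
     (∃ m n : ℕ, n < m ∧ m ≤ q ∧ (σ ^ (2 ^ m)) i = (σ⁻¹ ^ (2 ^ n)) i)) ↔
      IsOuroborosNumber N l := by
  have hc : Nat.clog 2 N = q := by
    rw [hN]; exact Nat.clog_pow 2 q (by norm_num)
  have hpos : 0 < l := by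
    rw [hl]
    apply Function.IsPeriodicPt.minimalPeriod_pos (orderOf_pos σ)
    have h : (σ ^ orderOf σ) i = i := by rw [pow_orderOf_eq_one]; rfl
    rw [Equiv.Perm.coe_pow] at h
    exact h
  have h1 : ∀ k : ℕ, (σ ^ k) i = i ↔ l ∣ k := fun k => by
    rw [hl]; exact pow_apply_eq_self_iff_dvd σ i k
  have h2 : ∀ a b : ℕ, b ≤ a → ((σ ^ a) i = (σ ^ b) i ↔ l ∣ a - b) := fun a b hab => by
    obtain ⟨c, rfl⟩ := Nat.exists_eq_add_of_le hab
    rw [pow_add, Equiv.Perm.mul_apply, (σ ^ b).injective.eq_iff, h1, Nat.add_sub_cancel_left]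
  have h3 : ∀ a b : ℕ, ((σ ^ a) i = (σ⁻¹ ^ b) i ↔ l ∣ a + b) := fun a b => by
    rw [← h1, inv_pow, Equiv.Perm.eq_inv_iff_eq, add_comm, pow_add, Equiv.Perm.mul_apply]
  unfold IsOuroborosNumber
  rw [hc]
  simp only [h1, h3, hpos, true_and]
  have h4 : ∀ m n : ℕ, (n < m ∧ m ≤ q ∧ (σ ^ (2 ^ m)) i = (σ ^ (2 ^ n)) i) ↔
      (n < m ∧ m ≤ q ∧ l ∣ 2 ^ m - 2 ^ n) := fun m n =>
    and_congr_right fun hnm => and_congr_right fun _ =>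
      h2 _ _ (Nat.pow_le_pow_right (by norm_num) hnm.le)
  simp only [h4]
end
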